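/- Let H be a finitely generated abelian group. Then the restricted wreath product H ≀ ℤ admits an invariant finite L-presentation: if H = ⟨X | C⟩ with X finite and C the commutation and order relations, then H ≀ ℤ ≅ ⟨X ∪ {t} | ∅ | {σ_y : y ∈ X} | {[x, y^t] : x,y ∈ X} ∪ {x^{r_x} : x ∈ X, r_x < ∞}⟩, where σ_y fixes t and all x ≠ y and sends y ↦ y^t·y, and each σ_y induces an endomorphism of H ≀ ℤ. -/

import Mathlib

section aux
theorem aux_comm {n : ℕ} {P : Type*} [Group P] (a : Fin n → ℤ → P)
    (h1 : ∀ x y, Commute (a x 0) (a y (-1)))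
    (hs : ∀ x y i j m, Commute (a x i) (a y j) → Commute (a x (i+m)) (a y (j+m)))
    (hσ : ∀ z x y i j, Commute (a x i) (a y j) →
      Commute (if x = z then a x (i-1) * a x i else a x i)
        (if y = z then a y (j-1) * a y j else a y j)) :
    ∀ x y i j, Commute (a x i) (a y j) := by
  have canc : ∀ u v w : P, Commute u (v * w) → Commute u w → Commute u v := by
    intro u v w h h'
    simpa using h.mul_right h'.inv_right
  have key : ∀ k : ℕ, ∀ x y, Commute (a x 0) (a y (-(k:ℤ))) := by
    intro k
    induction k using Nat.strong_induction_on with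
    | _ k ih =>
    rcases k with _ | _ | k
    · intro x y
      by_cases hxy : x = y
      · subst hxy; simp
      · have := hσ x x y 0 (-1) (h1 x y)
        rw [if_pos rfl, if_neg (Ne.symm hxy)] at this
        have h2 := (canc _ _ _ this.symm (h1 x y).symm).symm
        have := hs _ _ _ _ 1 h2
        simpa using this
    · intro x y; simpa using h1 x y
    · intro x y
      have hk := ih (k+1) (by omega) 
      have e1 : (-(((k+1+1 : ℕ)):ℤ)) = -((k+1:ℕ):ℤ) - 1 := by push_cast; ring
      rw [e1]
      have := hσ y x y _ _ (hk x y)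
      by_cases hxy : x = y
      · subst hxy
        rw [if_pos rfl, if_pos rfl] at this
        have c1 : Commute (a x (0-1)) (a x (-((k+1:ℕ):ℤ) - 1)) := by
          have := hs _ _ _ _ (-1) (hk x x)
          simpa [sub_eq_add_neg] using this
        have c2 : Commute (a x (0-1)) (a x (-((k+1:ℕ):ℤ))) := by
          have := hs _ _ _ _ (-1) (ih k (by omega) x x)
          convert this using 2 <;> omega
        have c3 := c1.mul_right c2
        have c4 : Commute (a x 0) (a x (-((k+1:ℕ):ℤ) - 1) * a x (-((k+1:ℕ):ℤ))) := by
          have := c3.inv_left.mul_left this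
          simpa using this
        exact canc _ _ _ c4 (hk x x)
      · rw [if_neg hxy, if_pos rfl] at this
        exact canc _ _ _ this (hk x y)
  have key2 : ∀ x y i j, j ≤ i → Commute (a x i) (a y j) := by
    intro x y i j hij
    have := hs _ _ _ _ i (key (i-j).toNat x y)
    rw [Int.toNat_of_nonneg (by omega)] at this
    simpa using this
  intro x y i j
  rcases le_total j i with h | h
  · exact key2 _ _ _ _ h
  · exact (key2 _ _ _ _ h).symm

theorem aux_gen {H : Type*} [AddCommGroup H] {n : ℕ} {r : Fin n → ℕ}
    (e : H ≃+ ((i : Fin n) → ZMod (r i)))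
    (K : Subgroup (Multiplicative (ℤ →₀ H)))
    (hK : ∀ x j, Multiplicative.ofAdd (Finsupp.single j (e.symm (Pi.single x 1))) ∈ K) :
    K = ⊤ := by
  have h1 : ∀ j x (z : ZMod (r x)),
      Multiplicative.ofAdd (Finsupp.single j (e.symm (Pi.single x z))) ∈ K := by
    intro j x z
    obtain ⟨k, rfl⟩ := ZMod.intCast_surjective z
    have := K.zpow_mem (hK x j) k
    rw [← ofAdd_zsmul, Finsupp.smul_single, ← map_zsmul, ← Pi.single_smul] at this
    simpa using this
  have h2 : ∀ j h, Multiplicative.ofAdd (Finsupp.single j h) ∈ K := by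
    intro j h
    have : h = ∑ x, e.symm (Pi.single x (e h x)) := by
      rw [← map_sum, Finset.univ_sum_single, e.symm_apply_apply]
    rw [this, ← Finsupp.singleAddHom_apply, map_sum, ofAdd_sum]
    exact K.prod_mem fun x _ => h1 j x _
  rw [eq_top_iff]
  rintro f -
  change Multiplicative.ofAdd (Multiplicative.toAdd f) ∈ K
  induction Multiplicative.toAdd f using Finsupp.induction_linear with
  | zero => exact K.one_mem
  | add f g hf hg => exact K.mul_mem hf hg
  | single j h => exact h2 j h

theorem aux_exists_comm {H : Type*} [AddCommGroup H] {n : ℕ} {r : Fin n → ℕ}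
    (e : H ≃+ ((i : Fin n) → ZMod (r i))) {A : Type*} [CommGroup A]
    (a : Fin n → ℤ → A) (hr : ∀ x j, a x j ^ r x = 1) :
    ∃ B : Multiplicative (ℤ →₀ H) →* A, ∀ x j,
      B (Multiplicative.ofAdd (Finsupp.single j (e.symm (Pi.single x 1)))) = a x j := by
  let L : ∀ x, ℤ → (ZMod (r x) →+ Additive A) := fun x j =>
    ZMod.lift (r x) ⟨zmultiplesHom (Additive A) (Additive.ofMul (a x j)), by
      simp [← ofMul_pow, hr]⟩
  let M : ℤ → (H →+ Additive A) := fun j =>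
    ∑ x, ((L x j).comp (Pi.evalAddMonoidHom _ x)).comp e.toAddMonoidHom
  refine ⟨AddMonoidHom.toMultiplicativeLeft (Finsupp.liftAddHom M), ?_⟩
  intro x j
  apply Additive.ofMul.injective
  change Finsupp.liftAddHom M (Finsupp.single j (e.symm (Pi.single x 1))) = _
  simp only [Finsupp.liftAddHom_apply_single, M, AddMonoidHom.finsetSum_apply]
  rw [Finset.sum_eq_single x]
  · simp only [L, AddMonoidHom.comp_apply]
    simp
    have := ZMod.lift_coe (r x) ⟨zmultiplesHom (Additive A) (Additive.ofMul (a x j)), by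
      simp [← ofMul_pow, hr]⟩ 1
    simpa using this
  · intro b _ hb
    simp [hb]
  · simp

theorem aux_exists {H : Type*} [AddCommGroup H] {n : ℕ} {r : Fin n → ℕ}
    (e : H ≃+ ((i : Fin n) → ZMod (r i))) {P : Type*} [Group P]
    (a : Fin n → ℤ → P) (hc : ∀ x y i j, Commute (a x i) (a y j))
    (hr : ∀ x j, a x j ^ r x = 1) :
    ∃ B : Multiplicative (ℤ →₀ H) →* P, ∀ x j,
      B (Multiplicative.ofAdd (Finsupp.single j (e.symm (Pi.single x 1)))) = a x j := by
  let s : Set P := {p | ∃ x j, p = a x j}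
  let _ : CommGroup (Subgroup.closure s) := Subgroup.closureCommGroupOfComm (by
    rintro _ ⟨x, i, rfl⟩ _ ⟨y, j, rfl⟩; exact hc x y i j)
  obtain ⟨B, hB⟩ := aux_exists_comm e
    (A := Subgroup.closure s) (fun x j => ⟨a x j, Subgroup.subset_closure ⟨x, j, rfl⟩⟩)
    (fun x j => Subtype.ext (hr x j))
  exact ⟨(Subgroup.closure s).subtype.comp B, fun x j => by
    rw [MonoidHom.comp_apply, hB]; rfl⟩
end aux


/-- Conjugation `a^b = b⁻¹ a b`. -/
def conjBy {G : Type*} [Group G] (a b : G) : G := b⁻¹ * a * b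

/-- Commutator `[a,b] = a⁻¹ b⁻¹ a b`. -/
def commAt {G : Type*} [Group G] (a b : G) : G := a⁻¹ * b⁻¹ * a * b

/-- For a finitely generated abelian group `H` (decomposed, via `e`, as a direct
product of cyclic groups `ZMod (r i)`), the restricted wreath product
`H ≀ ℤ = (⨁_{j∈ℤ} H) ⋊ ℤ` (with `ℤ` acting by shift, encoded by `shift`) admits
the invariant finite L-presentation
`⟨X ∪ {t} | ∅ | {σ_y : y ∈ X} | {[x, y^t]} ∪ {x^{r_x} : r_x < ∞}⟩`,
where `σ_y` fixes `t` and all `x ≠ y` and sends `y ↦ y^t·y`; invariance means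
each `σ_y` leaves the normal closure of the relators invariant, i.e. induces an
endomorphism of the presented group. -/
theorem wreath_product_fg_abelian_with_int_invariantly_finitely_Lpresented
    {H : Type*} [AddCommGroup H] (n : ℕ) (r : Fin n → ℕ)
    (e : H ≃+ ((i : Fin n) → ZMod (r i)))
    (shift : Multiplicative ℤ →* MulAut (Multiplicative (ℤ →₀ H)))
    (hshift : ∀ (k : ℤ) (f : ℤ →₀ H) (j : ℤ),
      Multiplicative.toAdd
        (shift (Multiplicative.ofAdd k) (Multiplicative.ofAdd f)) j = f (j - k))
    (σ : Fin n → Monoid.End (FreeGroup (Fin n ⊕ Unit)))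
    (hσ : ∀ y : Fin n, σ y = (FreeGroup.lift fun g : Fin n ⊕ Unit =>
      match g with
      | Sum.inl x =>
          if x = y then
            conjBy (FreeGroup.of (Sum.inl y)) (FreeGroup.of (Sum.inr ())) *
              FreeGroup.of (Sum.inl y)
          else FreeGroup.of (Sum.inl x)
      | Sum.inr _ => FreeGroup.of (Sum.inr ()) :
        FreeGroup (Fin n ⊕ Unit) →* FreeGroup (Fin n ⊕ Unit)))
    (R : Set (FreeGroup (Fin n ⊕ Unit)))
    (hR : R = {w | ∃ x y : Fin n,
        w = commAt (FreeGroup.of (Sum.inl x))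
          (conjBy (FreeGroup.of (Sum.inl y)) (FreeGroup.of (Sum.inr ())))} ∪
      {w | ∃ x : Fin n, r x ≠ 0 ∧ w = FreeGroup.of (Sum.inl x) ^ (r x)})
    (rels : Set (FreeGroup (Fin n ⊕ Unit)))
    (hrels : rels = ⋃ φ ∈ Submonoid.closure (Set.range σ), ⇑φ '' R) :
    Nonempty ((Multiplicative (ℤ →₀ H) ⋊[shift] Multiplicative ℤ) ≃*
        PresentedGroup rels) ∧
      ∀ y : Fin n, ∀ w ∈ Subgroup.normalClosure rels,
        σ y w ∈ Subgroup.normalClosure rels := by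
  classical
  have hinv : ∀ y : Fin n, ∀ w ∈ Subgroup.normalClosure rels,
        σ y w ∈ Subgroup.normalClosure rels := by
    intro y
    have : Subgroup.normalClosure rels ≤ (Subgroup.normalClosure rels).comap (σ y) := by
      have hn : ((Subgroup.normalClosure rels).comap (σ y)).Normal :=
        Subgroup.Normal.comap Subgroup.normalClosure_normal (σ y)
      apply Subgroup.normalClosure_le_normal
      intro w hw
      rw [hrels] at hw
      simp only [Set.mem_iUnion, Set.mem_image] at hw
      obtain ⟨φ, hφ, v, hv, rfl⟩ := hw
      apply Subgroup.subset_normalClosure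
      rw [hrels]
      simp only [Set.mem_iUnion, Set.mem_image]
      exact ⟨σ y * φ, mul_mem (Submonoid.subset_closure ⟨y, rfl⟩) hφ, v, hv, rfl⟩
    exact this
  refine ⟨?_, hinv⟩
  have hRrels : R ⊆ rels := by
    intro w hw
    rw [hrels]
    simp only [Set.mem_iUnion, Set.mem_image]
    exact ⟨1, one_mem _, w, hw, rfl⟩
  have hσt : ∀ y, σ y (FreeGroup.of (Sum.inr ())) = FreeGroup.of (Sum.inr ()) := by
    intro y; rw [hσ]; exact FreeGroup.lift_apply_of
  have hσx : ∀ y x, σ y (FreeGroup.of (Sum.inl x)) = if x = y then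
            conjBy (FreeGroup.of (Sum.inl x)) (FreeGroup.of (Sum.inr ())) *
              FreeGroup.of (Sum.inl x)
          else FreeGroup.of (Sum.inl x) := by
    intro y x; rw [hσ]
    refine FreeGroup.lift_apply_of.trans ?_
    by_cases h : x = y
    · subst h; rfl
    · simp [h]
  -- the quotient map
  let q : FreeGroup (Fin n ⊕ Unit) →* PresentedGroup rels := PresentedGroup.mk rels
  have hq : ∀ w, q w = 1 ↔ w ∈ Subgroup.normalClosure rels := fun w =>
    QuotientGroup.eq_one_iff w
  have hqσ : ∀ y u v, q u = q v → q (σ y u) = q (σ y v) := by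
    intro y u v h
    have h1 : q (u * v⁻¹) = 1 := by simp [h]
    have h2 := (hq _).2 (hinv y _ ((hq _).1 h1))
    rw [map_mul, map_inv, map_mul, map_inv] at h2
    exact mul_inv_eq_one.1 h2
  let T : FreeGroup (Fin n ⊕ Unit) := FreeGroup.of (Sum.inr ())
  let X : Fin n → ℤ → FreeGroup (Fin n ⊕ Unit) := fun x j =>
    T ^ j * FreeGroup.of (Sum.inl x) * T ^ (-j)
  have hσX : ∀ y x j, σ y (X x j) = if x = y then X x (j-1) * X x j else X x j := by
    intro y x j
    simp only [X]
    rw [map_mul, map_mul, map_zpow, map_zpow, hσx]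
    change (σ y T ^ j) * _ * (σ y T ^ (-j)) = _
    rw [show σ y T = T from hσt y]
    by_cases h : x = y
    · simp only [h, if_true, conjBy]
      change T ^ j * (T⁻¹ * _ * T * _) * T ^ (-j) = _
      group
    · simp [h]
  let a : Fin n → ℤ → PresentedGroup rels := fun x j => q (X x j)
  have hshiftX : ∀ x j m, X x (j + m) = T ^ m * X x j * (T ^ m)⁻¹ := by
    intro x j m
    simp only [X]
    group
  have hconj : ∀ x j m, a x (j + m) = MulAut.conj (q T ^ m) (a x j) := by
    intro x j m
    rw [MulAut.conj_apply]
    simp only [a, hshiftX, map_mul, map_inv, map_zpow]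
  have hcomm : ∀ x y i j, Commute (a x i) (a y j) := by
    apply aux_comm
    · intro x y
      have h : commAt (FreeGroup.of (Sum.inl x))
          (conjBy (FreeGroup.of (Sum.inl y)) (FreeGroup.of (Sum.inr ()))) ∈
            Subgroup.normalClosure rels := by
        apply Subgroup.subset_normalClosure
        apply hRrels
        rw [hR]
        exact Or.inl ⟨x, y, rfl⟩
      have h2 := (hq _).2 h
      have e0 : a x 0 = q (FreeGroup.of (Sum.inl x)) := by simp [a, X]
      have e1 : a y (-1) = q (conjBy (FreeGroup.of (Sum.inl y)) (FreeGroup.of (Sum.inr ()))) := by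
        simp [a, X, conjBy, T]
      rw [e0, e1]
      simp only [commAt, map_mul, map_inv] at h2
      have h3 : ∀ u v : PresentedGroup rels, u⁻¹ * v⁻¹ * u * v = 1 → Commute u v := by
        intro u v h
        have : u⁻¹ * v⁻¹ * u * v = (v * u)⁻¹ * (u * v) := by group
        rw [this, inv_mul_eq_one] at h
        exact h.symm
      exact h3 _ _ h2
    · intro x y i j m h
      rw [hconj, hconj]
      exact h.map (MulAut.conj (q T ^ m))
    · intro z x y i j h
      have h1 : q (X x i * X y j) = q (X y j * X x i) := by
        rw [map_mul, map_mul]; exact h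
      have h2 := hqσ z _ _ h1
      rw [map_mul (σ z) (X x i) (X y j), map_mul (σ z) (X y j) (X x i), hσX, hσX,
        map_mul q, map_mul q] at h2
      have e : ∀ x i, q (if x = z then X x (i-1) * X x i else X x i) =
          if x = z then a x (i-1) * a x i else a x i := by
        intro x i; split_ifs <;> simp [a]
      rw [e, e] at h2
      exact h2
  have hord : ∀ x j, a x j ^ r x = 1 := by
    intro x j
    by_cases h0 : r x = 0
    · simp [h0]
    have h : FreeGroup.of (Sum.inl x) ^ (r x) ∈ Subgroup.normalClosure rels := by
      apply Subgroup.subset_normalClosure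
      apply hRrels
      rw [hR]
      exact Or.inr ⟨x, h0, rfl⟩
    have h2 := (hq _).2 h
    have e0 : a x 0 = q (FreeGroup.of (Sum.inl x)) := by simp [a, X]
    rw [map_pow, ← e0] at h2
    have := hconj x 0 j
    rw [zero_add] at this
    rw [this, ← map_pow, h2, map_one]
  obtain ⟨B, hB⟩ := aux_exists e a hcomm hord
  have hsh : ∀ (k j : ℤ) (h : H), shift (Multiplicative.ofAdd k)
      (Multiplicative.ofAdd (Finsupp.single j h)) =
        Multiplicative.ofAdd (Finsupp.single (j + k) h) := by
    intro k j h
    apply Multiplicative.toAdd.injective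
    ext i
    rw [hshift]
    simp only [toAdd_ofAdd, Finsupp.single_apply]
    congr 1
    simp only [eq_iff_iff]; omega
  -- the map from the wreath product
  let g : (Multiplicative (ℤ →₀ H) ⋊[shift] Multiplicative ℤ) →* PresentedGroup rels :=
    SemidirectProduct.lift B (zpowersHom _ (q T)) (by
      intro k
      have := aux_gen e (MonoidHom.eqLocus (B.comp (shift k).toMonoidHom)
        ((MulAut.conj (zpowersHom _ (q T) k)).toMonoidHom.comp B)) (by
          intro x j
          change B (shift (Multiplicative.ofAdd (Multiplicative.toAdd k)) _) = MulAut.conj _ (B _)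
          rw [hsh, hB, hB, hconj, zpowersHom_apply])
      exact MonoidHom.eq_of_eqOn_top (by rw [← this]; exact fun _ h => h))
  -- the map to the wreath product
  let b : Fin n → ℤ → Multiplicative (ℤ →₀ H) := fun x j =>
    Multiplicative.ofAdd (Finsupp.single j (e.symm (Pi.single x 1)))
  let tt : Multiplicative (ℤ →₀ H) ⋊[shift] Multiplicative ℤ :=
    SemidirectProduct.inr (Multiplicative.ofAdd 1)
  let f0 : Fin n ⊕ Unit → Multiplicative (ℤ →₀ H) ⋊[shift] Multiplicative ℤ :=
    fun s => match s with
      | Sum.inl x => SemidirectProduct.inl (b x 0)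
      | Sum.inr _ => tt
  have hbr : ∀ x, (b x 0) ^ r x = 1 := by
    intro x
    simp only [b]
    rw [← ofAdd_nsmul, Finsupp.smul_single, ← map_nsmul, ← Pi.single_smul]
    simp
  have htt : ∀ p : Multiplicative (ℤ →₀ H), conjBy (SemidirectProduct.inl p) tt =
      SemidirectProduct.inl (shift (Multiplicative.ofAdd (-1)) p) := by
    intro p
    rw [SemidirectProduct.inl_aut]
    simp [conjBy, tt]
  have hφ : ∀ φ ∈ Submonoid.closure (Set.range σ),
      FreeGroup.lift f0 (φ T) = tt ∧ ∀ x, ∃ p : Multiplicative (ℤ →₀ H), p ^ r x = 1 ∧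
        FreeGroup.lift f0 (φ (FreeGroup.of (Sum.inl x))) = SemidirectProduct.inl p := by
    intro φ hφ
    induction hφ using Submonoid.closure_induction_right with
    | one => 
      refine ⟨FreeGroup.lift_apply_of, fun x => ⟨b x 0, hbr x, FreeGroup.lift_apply_of⟩⟩
    | mul_right φ _ s hs ih =>
      obtain ⟨y, rfl⟩ := hs
      refine ⟨?_, fun x => ?_⟩
      · change FreeGroup.lift f0 (φ (σ y T)) = tt
        rw [show σ y T = T from hσt y]; exact ih.1
      · obtain ⟨p, hp, hp2⟩ := ih.2 x
        change ∃ p, _ ∧ FreeGroup.lift f0 (φ (σ y _)) = _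
        rw [hσx]
        by_cases h : x = y
        · refine ⟨shift (Multiplicative.ofAdd (-1)) p * p, ?_, ?_⟩
          · rw [mul_pow, ← map_pow, hp]; simp
          · rw [if_pos h, map_mul, map_mul, hp2, map_mul, ← htt]
            congr 1
            simp only [conjBy, map_mul, map_inv, hp2]
            rw [show FreeGroup.lift f0 (φ (FreeGroup.of (Sum.inr ()))) = tt from ih.1]
        · exact ⟨p, hp, by rw [if_neg h]; exact hp2⟩
  have hf : ∀ w ∈ rels, FreeGroup.lift f0 w = 1 := by
    intro w hw
    rw [hrels] at hw
    simp only [Set.mem_iUnion, Set.mem_image] at hw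
    obtain ⟨φ, hφm, v, hv, rfl⟩ := hw
    obtain ⟨h1, h2⟩ := hφ φ hφm
    rw [hR] at hv
    rcases hv with ⟨x, y, rfl⟩ | ⟨x, _, rfl⟩
    · obtain ⟨p, -, hp⟩ := h2 x
      obtain ⟨p', -, hp'⟩ := h2 y
      have : FreeGroup.lift f0 (φ (conjBy (FreeGroup.of (Sum.inl y))
          (FreeGroup.of (Sum.inr ())))) =
          SemidirectProduct.inl (shift (Multiplicative.ofAdd (-1)) p') := by
        rw [← htt]
        simp only [conjBy, map_mul, map_inv, hp']
        rw [show FreeGroup.lift f0 (φ (FreeGroup.of (Sum.inr ()))) = tt from h1]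
      simp only [commAt, map_mul, map_inv, hp, this]
      rw [← map_inv, ← map_inv, ← map_mul, ← map_mul, ← map_mul]
      rw [mul_assoc, mul_comm p, ← mul_inv_rev, inv_mul_cancel, map_one]
    · obtain ⟨p, hp, hp'⟩ := h2 x
      rw [map_pow, map_pow, hp', ← map_pow, hp, map_one]
  let f : PresentedGroup rels →* Multiplicative (ℤ →₀ H) ⋊[shift] Multiplicative ℤ :=
    PresentedGroup.toGroup hf
  have hfq : ∀ w, f (q w) = FreeGroup.lift f0 w := fun w => rfl
  have hgf : g.comp f = MonoidHom.id _ := by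
    apply PresentedGroup.ext
    rintro (x | ⟨⟩)
    · change g (f (q (FreeGroup.of (Sum.inl x)))) = q (FreeGroup.of (Sum.inl x))
      rw [hfq, FreeGroup.lift_apply_of]
      change g (SemidirectProduct.inl (b x 0)) = _
      simp only [g, SemidirectProduct.lift_inl]
      refine (hB x 0).trans ?_
      simp [a, X]
    · change g (f (q T)) = q T
      rw [hfq, FreeGroup.lift_apply_of]
      change g (SemidirectProduct.inr (Multiplicative.ofAdd 1)) = _
      simp only [g, SemidirectProduct.lift_inr]
      simp
  have hinj : Function.Injective f := by
    intro u v h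
    have h1 := DFunLike.congr_fun hgf u
    have h2 := DFunLike.congr_fun hgf v
    simp only [MonoidHom.comp_apply, MonoidHom.id_apply] at h1 h2
    rw [← h1, ← h2, h]
  have htk : ∀ k : ℤ, f (q (T ^ k)) = SemidirectProduct.inr (Multiplicative.ofAdd k) := by
    intro k
    rw [hfq, map_zpow, FreeGroup.lift_apply_of]
    change (SemidirectProduct.inr (Multiplicative.ofAdd 1) :
      Multiplicative (ℤ →₀ H) ⋊[shift] Multiplicative ℤ) ^ k = _
    rw [← map_zpow, ← ofAdd_zsmul]; simp
  have hsurj : Function.Surjective f := by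
    have hK := aux_gen e (f.range.comap SemidirectProduct.inl) (by
      intro x j
      refine ⟨a x j, ?_⟩
      have : f (a x j) = f (q (T ^ j)) * f (q (FreeGroup.of (Sum.inl x))) * f (q (T ^ (-j))) := by
        simp only [a, X, map_mul]
      rw [this, htk, htk, hfq, FreeGroup.lift_apply_of]
      change _ * SemidirectProduct.inl (b x 0) * _ = _
      have h2 := hsh j 0 (e.symm (Pi.single x 1))
      rw [zero_add] at h2
      rw [← h2, SemidirectProduct.inl_aut, ofAdd_neg, map_inv])
    intro w
    rw [← SemidirectProduct.inl_left_mul_inr_right w]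
    have h1 : w.left ∈ f.range.comap SemidirectProduct.inl := by rw [hK]; trivial
    obtain ⟨u, hu⟩ := h1
    refine ⟨u * q (T ^ (Multiplicative.toAdd w.right)), ?_⟩
    rw [map_mul, hu, htk]; rfl
  exact ⟨(MulEquiv.ofBijective f ⟨hinj, hsurj⟩).symm⟩
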